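/- Let n ∈ ℕ, ω = (2n+1)π and r₀ = ω²/2. Suppose λ : ℝ → ℂ is differentiable at r₀, λ(r₀) = iω, and λ(r) = −r·∫_{s∈(0,1)} e^{−λ(r)s} ds holds for all r in some neighborhood of r₀. Then Re(λ'(r₀)) = 1/(4 + (r₀/ω)²) > 0; i.e., the purely imaginary characteristic root crosses the imaginary axis transversally from left to right as r increases through r₀. -/

import Mathlib

/-!
Multiplying the characteristic equation by `λ` removes the integral: every root satisfies
`λ² = -r (1 - e^{-λ})` (`sq_eq_of_char_eq`). Differentiating this identity at `r₀`, where
`λ = iω` and `e^{-iω} = -1` because `ω` is an odd multiple of `π`, gives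
`2iω λ' = -2 + r₀ λ'`, that is, `λ' = 2 / (r₀ - 2iω)`. Its real part is
`2 r₀ / (r₀² + 4ω²)`, which equals `1 / (4 + (r₀/ω)²)` since `2 r₀ = ω²`.
-/

open Real Filter

theorem sq_eq_of_char_eq (r z : ℂ)
    (h : z = -r * ∫ s in (0:ℝ)..1, Complex.exp (-z * (s : ℂ))) :
    z * z = -r * (1 - Complex.exp (-z)) := by
  rcases eq_or_ne z 0 with rfl | hz
  · simp
  · rw [integral_exp_mul_complex (neg_ne_zero.mpr hz)] at h
    have h2 : z * z = z * (-r * ((Complex.exp (-z * ((1:ℝ):ℂ)) -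
        Complex.exp (-z * ((0:ℝ):ℂ))) / -z)) := congrArg (z * ·) h
    rw [h2]
    simp
    field_simp
    ring

/-- Transversal crossing of the purely imaginary characteristic roots:
if `λ : ℝ → ℂ` is a branch of characteristic roots near `r₀ = ω²/2`,
`ω = (2n+1)π`, with `λ(r₀) = iω`, then `Re λ'(r₀) = 1/(4 + (r₀/ω)²) > 0`. -/
theorem char_root_transversal_crossing (n : ℕ) (ω r₀ : ℝ)
    (hω : ω = (2 * (n : ℝ) + 1) * π) (hr₀ : r₀ = ω ^ 2 / 2)
    (lam : ℝ → ℂ) (lam' : ℂ) (hderiv : HasDerivAt lam lam' r₀)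
    (hval : lam r₀ = Complex.I * (ω : ℂ))
    (hchar : ∀ᶠ r in nhds r₀,
      lam r = -(r : ℂ) * ∫ s in (0:ℝ)..1, Complex.exp (-(lam r) * (s : ℂ))) :
    lam'.re = 1 / (4 + (r₀ / ω) ^ 2) ∧ lam'.re > 0 := by
  have hωpos : 0 < ω := by rw [hω]; positivity
  have hexp : Complex.exp (-(Complex.I * (ω : ℂ))) = -1 := by
    have h1 : -(Complex.I * (ω : ℂ)) =
        -(π * Complex.I) - (n : ℂ) * (2 * π * Complex.I) := by
      rw [hω]; push_cast; ring
    rw [h1, Complex.exp_sub, Complex.exp_nat_mul_two_pi_mul_I, Complex.exp_neg,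
      Complex.exp_pi_mul_I]
    norm_num
  have hev : (fun r : ℝ => lam r * lam r) =ᶠ[nhds r₀]
      fun r : ℝ => -(r : ℂ) * (1 - Complex.exp (-(lam r))) :=
    hchar.mono fun r hr => sq_eq_of_char_eq r (lam r) hr
  have hleft : HasDerivAt (fun r : ℝ => lam r * lam r)
      (lam' * lam r₀ + lam r₀ * lam') r₀ := hderiv.mul hderiv
  have hid : HasDerivAt (fun r : ℝ => -(r : ℂ)) (-1) r₀ :=
    (Complex.ofRealCLM.hasDerivAt (x := r₀)).neg
  have hright : HasDerivAt (fun r : ℝ => -(r : ℂ) * (1 - Complex.exp (-(lam r))))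
      (-1 * (1 - Complex.exp (-(lam r₀))) +
        -(r₀ : ℂ) * (-(Complex.exp (-(lam r₀)) * -lam'))) r₀ :=
    hid.mul (hderiv.neg.cexp.const_sub 1)
  have heq := (hleft.congr_of_eventuallyEq hev.symm).unique hright
  rw [hval, hexp] at heq
  have hre := congrArg Complex.re heq
  have him := congrArg Complex.im heq
  simp at hre him
  have hre_lam : lam'.re = 1 / (4 + (r₀ / ω) ^ 2) := by
    have key : lam'.re * (r₀ ^ 2 + 4 * ω ^ 2) = 2 * r₀ := by
      linear_combination (-r₀) * hre + 2 * ω * him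
    have hne : r₀ ^ 2 + 4 * ω ^ 2 ≠ 0 := by positivity
    have h4 : 4 + (r₀ / ω) ^ 2 = (r₀ ^ 2 + 4 * ω ^ 2) / ω ^ 2 := by
      field_simp; ring
    rw [h4, one_div_div, eq_div_iff hne, key, hr₀]
    ring
  exact ⟨hre_lam, by rw [hre_lam]; positivity⟩
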